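/- arXiv:1211.6833 — 2 statements merged into one kernel-verified Lean document; each statement's English description precedes it below -/
import Mathlib

section
/- Let K be a field, A a commutative K-algebra, and M an A-module. Regard M as an A^{⊗3}-module via μ_3 and as an A^{⊗4}-module via μ_4; regard A as an A^{⊗3}-module via μ_3; regard A⊗A as an A^{⊗4}-module via the ring homomorphism A^{⊗4} → A^{⊗2} sending a⊗b⊗c⊗d to ab⊗cd. Then for every natural number n, the K-vector spaces Tor_n^{A^{⊗4}}(M, A⊗A) and Tor_n^{A^{⊗3}}(M, A) are isomorphic. -/
/-!
STATEMENT 0: Let `K` be a field, `A` a commutative `K`-algebra, and `M` an `A`-module.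
Regard `M` as an `A^{⊗3}`-module via `μ₃` and as an `A^{⊗4}`-module via `μ₄`; regard `A` as
an `A^{⊗3}`-module via `μ₃`; regard `A ⊗ A` as an `A^{⊗4}`-module via the ring homomorphism
`A^{⊗4} → A^{⊗2}`, `a ⊗ b ⊗ c ⊗ d ↦ ab ⊗ cd`.  Then for every `n : ℕ`, the `K`-vector spaces
`Tor_n^{A^{⊗4}}(M, A ⊗ A)` and `Tor_n^{A^{⊗3}}(M, A)` are isomorphic.
(We bracket `A^{⊗3} = (A ⊗ A) ⊗ A` and `A^{⊗4} = (A ⊗ A) ⊗ (A ⊗ A)`.)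
-/

open CategoryTheory
open scoped TensorProduct

noncomputable section

/-- The multiplication map `μ₂ : A ⊗ A → A`. -/
def mu2 (K : Type) [Field K] (A : Type) [CommRing A] [Algebra K A] :
    A ⊗[K] A →ₐ[K] A :=
  Algebra.TensorProduct.lmul' K

/-- The multiplication map `μ₃ : A^{⊗3} = (A ⊗ A) ⊗ A → A`, `a ⊗ b ⊗ c ↦ abc`. -/
def mu3 (K : Type) [Field K] (A : Type) [CommRing A] [Algebra K A] :
    (A ⊗[K] A) ⊗[K] A →ₐ[K] A :=
  (mu2 K A).comp (Algebra.TensorProduct.map (mu2 K A) (AlgHom.id K A))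

/-- The multiplication map `μ₄ : A^{⊗4} = (A ⊗ A) ⊗ (A ⊗ A) → A`, `a ⊗ b ⊗ c ⊗ d ↦ abcd`. -/
def mu4 (K : Type) [Field K] (A : Type) [CommRing A] [Algebra K A] :
    (A ⊗[K] A) ⊗[K] (A ⊗[K] A) →ₐ[K] A :=
  (mu2 K A).comp (Algebra.TensorProduct.map (mu2 K A) (mu2 K A))

/-- The map `ν : A^{⊗4} → A^{⊗2}`, `a ⊗ b ⊗ c ⊗ d ↦ ab ⊗ cd`. -/
def nu (K : Type) [Field K] (A : Type) [CommRing A] [Algebra K A] :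
    (A ⊗[K] A) ⊗[K] (A ⊗[K] A) →ₐ[K] A ⊗[K] A :=
  Algebra.TensorProduct.map (mu2 K A) (mu2 K A)

/-!
Let `T = A ⊗ A` map to `A^{⊗4}` as the two middle factors.  The map `φ = 1 ⊗ μ ⊗ 1` from `A^{⊗4}`
to `A^{⊗3}` is the base change of the multiplication `T → A`, and over `T` both `A^{⊗4}` and the
module `A ⊗ A` are projective.  Hence a projective resolution `P` of `A ⊗ A` over `A^{⊗4}` is also
one over `T`, so `A^{⊗3} ⊗ P ≅ A ⊗_T P` is a resolution of `A^{⊗3} ⊗ (A ⊗ A) ≅ A ⊗_T (A ⊗ A) = A`.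
It computes the second `Tor`, and since `M ⊗ P ≅ M ⊗ (A^{⊗3} ⊗ P)` for an `A^{⊗3}`-module `M`, it
computes the first one too.
-/

universe u

section HomologicalAlgebra

variable {C D E D' : Type*} [Category* C] [Category* D] [Category* E] [Category* D']
  [Abelian C] [Abelian D] [Abelian E] [Abelian D']

lemma quasiIso_map_π_of_projective {X : C} [Projective X] (P : ProjectiveResolution X)
    (F : C ⥤ D) [F.Additive] : QuasiIso ((F.mapHomologicalComplex _).map P.π) := by
  have hπ : (ProjectiveResolution.homotopyEquiv P (.self X)).hom = P.π :=
    (Category.comp_id _).symm.trans (ProjectiveResolution.homotopyEquiv_hom_π P (.self X))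
  rw [← hπ]
  exact (F.mapHomotopyEquiv _).quasiIso_hom

lemma quasiIso_map_map_π_of_projective_obj (G : C ⥤ D) [G.Additive] [G.PreservesProjectiveObjects]
    [G.PreservesHomology] (F : D ⥤ E) [F.Additive] {X : C} [Projective (G.obj X)]
    (P : ProjectiveResolution X) :
    QuasiIso ((F.mapHomologicalComplex _).map ((G.mapHomologicalComplex _).map P.π)) := by
  have hcomp : QuasiIso ((F.mapHomologicalComplex _).map ((G.mapHomologicalComplex _).map P.π) ≫
      (F.mapHomologicalComplex _).map
        ((HomologicalComplex.singleMapHomologicalComplex G _ 0).hom.app X)) := by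
    rw [← Functor.map_comp]
    exact quasiIso_map_π_of_projective (G.mapProjectiveResolution P) F
  exact quasiIso_of_comp_right _ _ (hφφ' := hcomp)

/-- The image `F(P)` of a projective resolution `P` of `X`, as a projective resolution of `F(X)`.
Unlike `Functor.mapProjectiveResolution`, this does not need `F` to be exact, only that `F` keeps
the augmentation of `P` a quasi-isomorphism. -/
def mapProjectiveResolutionOfQuasiIso (F : C ⥤ D) [F.Additive] [F.PreservesProjectiveObjects]
    {X : C} (P : ProjectiveResolution X) [QuasiIso ((F.mapHomologicalComplex _).map P.π)] :
    ProjectiveResolution (F.obj X) where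
  complex := (F.mapHomologicalComplex _).obj P.complex
  projective n := F.projective_obj_of_projective (P.projective n)
  π := (F.mapHomologicalComplex _).map P.π ≫
    (HomologicalComplex.singleMapHomologicalComplex F _ 0).hom.app X

/-- If `H ≅ F ⋙ H' ⋙ U` with `U` exact, and `F` sends some projective resolution of `X` to a
projective resolution, then the left derived functors of `H` at `X` are those of `H'` at `F(X)`. -/
def leftDerivedObjIsoOfQuasiIso [HasProjectiveResolutions C] [HasProjectiveResolutions D]
    {H : C ⥤ E} [H.Additive] {F : C ⥤ D} [F.Additive] [F.PreservesProjectiveObjects]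
    {H' : D ⥤ D'} [H'.Additive] {U : D' ⥤ E} [U.Additive] [U.PreservesHomology]
    (α : H ≅ F ⋙ H' ⋙ U) {X : C} (P : ProjectiveResolution X)
    [QuasiIso ((F.mapHomologicalComplex _).map P.π)] (n : ℕ) :
    (H.leftDerived n).obj X ≅ U.obj ((H'.leftDerived n).obj (F.obj X)) :=
  let Q := mapProjectiveResolutionOfQuasiIso F P
  P.isoLeftDerivedObj H n ≪≫
    (HomologicalComplex.homologyFunctor E _ n).mapIso
      ((NatIso.mapHomologicalComplex α _).app P.complex) ≪≫
    (((H'.mapHomologicalComplex _).obj Q.complex).sc n).mapHomologyIso U ≪≫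
    U.mapIso (Q.isoLeftDerivedObj H' n).symm

end HomologicalAlgebra

section ScalarExtension

variable {R S : Type u} [CommRing R] [CommRing S] (h : R →+* S)

instance : (ModuleCat.extendScalars.{u, u, u} h).Additive :=
  (ModuleCat.extendRestrictScalarsAdj.{u, u, u} h).left_adjoint_additive

instance : (ModuleCat.extendScalars.{u, u, u} h).PreservesProjectiveObjects :=
  Functor.preservesProjectiveObjects_of_adjunction_of_preservesEpimorphisms
    (ModuleCat.extendRestrictScalarsAdj.{u, u, u} h)

lemma restrictScalars_preservesProjectiveObjects
    [Projective ((ModuleCat.restrictScalars.{u} h).obj (.of S S))] :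
    (ModuleCat.restrictScalars.{u} h).PreservesProjectiveObjects := by
  have : (ModuleCat.coextendScalars.{u} h).PreservesEpimorphisms := ⟨fun {X Y} φ _ ↦
    (ModuleCat.epi_iff_surjective _).mpr fun y ↦
      ⟨(ModuleCat.CoextendScalars.equiv h X).symm
          (Projective.factorThru (ModuleCat.ofHom y) φ).hom,
        ModuleCat.hom_ext_iff.mp (Projective.factorThru_comp _ φ)⟩⟩
  exact Functor.preservesProjectiveObjects_of_adjunction_of_preservesEpimorphisms
    (ModuleCat.restrictCoextendScalarsAdj h)

lemma projective_restrictScalars_algebraMap (R S : Type u) [CommRing R] [CommRing S] [Algebra R S]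
    [Module.Projective R S] :
    Projective ((ModuleCat.restrictScalars.{u} (algebraMap R S)).obj (.of S S)) :=
  .of_iso (P := .of R S)
    (LinearEquiv.toModuleIso
      (X₂ := (ModuleCat.restrictScalars.{u} (algebraMap R S)).obj (.of S S))
      { AddEquiv.refl S with map_smul' := Algebra.smul_def })
    ((IsProjective.iff_projective _).mp inferInstance)

lemma projective_restrictScalars_restrictScalars_of_comp_eq_id {h : R →+* S} {r : S →+* R}
    (hr : r.comp h = .id R) (N : ModuleCat.{u} R) [Projective N] :
    Projective ((ModuleCat.restrictScalars.{u} h).obj ((ModuleCat.restrictScalars r).obj N)) :=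
  .of_iso (((ModuleCat.restrictScalarsId R).app N).symm ≪≫
    ModuleCat.restrictScalarsComp'App _ _ _ hr.symm N) inferInstance

/-- The projection formula `h^*M ⊗_R X ≅ h^*(M ⊗_S (S ⊗_R X))`, naturally in `X`. -/
def tensoringLeftRestrictScalarsIso (M : ModuleCat.{u} S) :
    (MonoidalCategory.tensoringLeft (ModuleCat.{u} R)).obj
        ((ModuleCat.restrictScalars h).obj M) ≅
      ModuleCat.extendScalars h ⋙ (MonoidalCategory.tensoringLeft (ModuleCat.{u} S)).obj M ⋙
        ModuleCat.restrictScalars h := by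
  algebraize [h]
  letI : Module R M := .compHom M h
  haveI : IsScalarTower R S M := .of_compHom R S M
  exact NatIso.ofComponents
    (fun X ↦ LinearEquiv.toModuleIso
      (X₁ := ((MonoidalCategory.tensoringLeft (ModuleCat.{u} R)).obj
        ((ModuleCat.restrictScalars h).obj M)).obj X)
      (X₂ := (ModuleCat.extendScalars h ⋙
        (MonoidalCategory.tensoringLeft (ModuleCat.{u} S)).obj M ⋙
          ModuleCat.restrictScalars h).obj X)
      ((TensorProduct.AlgebraTensorModule.cancelBaseChange R S S M X).symm.restrictScalars R))
    fun _ ↦ ModuleCat.MonoidalCategory.tensor_ext fun _ _ ↦ rfl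

end ScalarExtension

section BaseChange

variable {T R B S : Type u} [CommRing T] [CommRing R] [CommRing B] [CommRing S]
  {f : T →+* R} {g : T →+* B} {h : R →+* S} {k : B →+* S}

/-- The Beck–Chevalley isomorphism `B ⊗_T f^*X ≅ k^*(S ⊗_R X)` of a pushout square
`S = B ⊗_T R` of commutative rings. -/
def restrictScalarsCompExtendScalarsIso
    (sq : IsPushout (CommRingCat.ofHom f) (CommRingCat.ofHom g)
      (CommRingCat.ofHom h) (CommRingCat.ofHom k)) :
    ModuleCat.restrictScalars.{u} f ⋙ ModuleCat.extendScalars.{u, u, u} g ≅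
      ModuleCat.extendScalars.{u, u, u} h ⋙ ModuleCat.restrictScalars k := by
  algebraize [f, g, h, k, h.comp f]
  have : IsScalarTower T B S := .of_algebraMap_eq' congr(($sq.w).hom)
  have : Algebra.IsPushout T B R S := CommRingCat.isPushout_iff_isPushout.mp sq.flip
  refine NatIso.ofComponents (fun X ↦
    letI : Module T X := .compHom X f
    haveI : IsScalarTower T R X := .of_compHom T R X
    LinearEquiv.toModuleIso
      (X₁ := (ModuleCat.restrictScalars f ⋙ ModuleCat.extendScalars g).obj X)
      (X₂ := (ModuleCat.extendScalars h ⋙ ModuleCat.restrictScalars k).obj X)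
      (Algebra.IsPushout.cancelBaseChange T B R S X).symm) fun {X Y} φ ↦ ?_
  let : Module T X := .compHom X f
  have : IsScalarTower T R X := .of_compHom T R X
  let : Module T Y := .compHom Y f
  have : IsScalarTower T R Y := .of_compHom T R Y
  refine ModuleCat.ExtendScalars.hom_ext fun (x : X) ↦ ?_
  change (Algebra.IsPushout.cancelBaseChange T B R S Y).symm (1 ⊗ₜ φ x) =
    φ.hom.baseChange S ((Algebra.IsPushout.cancelBaseChange T B R S X).symm (1 ⊗ₜ x))
  simp

/-- For a pushout square of commutative rings, `B ⊗_T R ≅ S` as `B`-modules. -/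
def extendScalarsRestrictScalarsSelfIso
    (sq : IsPushout (CommRingCat.ofHom f) (CommRingCat.ofHom g)
      (CommRingCat.ofHom h) (CommRingCat.ofHom k)) :
    (ModuleCat.extendScalars.{u, u, u} g).obj ((ModuleCat.restrictScalars f).obj (.of R R)) ≅
      (ModuleCat.restrictScalars k).obj (.of S S) :=
  (restrictScalarsCompExtendScalarsIso sq).app _ ≪≫ (ModuleCat.restrictScalars k).mapIso
    (Functor.Monoidal.εIso (ModuleCat.extendScalars.{u, u, u} h)).symm

lemma projective_restrictScalars_self_of_isPushout
    (sq : IsPushout (CommRingCat.ofHom f) (CommRingCat.ofHom g)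
      (CommRingCat.ofHom h) (CommRingCat.ofHom k))
    [Projective ((ModuleCat.restrictScalars.{u} f).obj (.of R R))] :
    Projective ((ModuleCat.restrictScalars.{u} k).obj (.of S S)) :=
  .of_iso (extendScalarsRestrictScalarsSelfIso sq)
    ((ModuleCat.extendScalars.{u, u, u} g).projective_obj_of_projective inferInstance)

lemma quasiIso_extendScalars_map_π
    (sq : IsPushout (CommRingCat.ofHom f) (CommRingCat.ofHom g)
      (CommRingCat.ofHom h) (CommRingCat.ofHom k))
    [Projective ((ModuleCat.restrictScalars.{u} f).obj (.of R R))] {N : ModuleCat.{u} R}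
    [Projective ((ModuleCat.restrictScalars.{u} f).obj N)] (P : ProjectiveResolution N) :
    QuasiIso (((ModuleCat.extendScalars.{u, u, u} h).mapHomologicalComplex _).map P.π) := by
  have := restrictScalars_preservesProjectiveObjects f
  have hg := quasiIso_map_map_π_of_projective_obj (ModuleCat.restrictScalars.{u} f)
    (ModuleCat.extendScalars.{u, u, u} g) P
  let e := NatIso.mapHomologicalComplex (restrictScalarsCompExtendScalarsIso sq)
    (ComplexShape.down ℕ)
  have hk : QuasiIso (((ModuleCat.restrictScalars.{u} k).mapHomologicalComplex _).map
      (((ModuleCat.extendScalars.{u, u, u} h).mapHomologicalComplex _).map P.π)) :=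
    quasiIso_of_arrow_mk_iso _ _
      (Arrow.isoMk (e.app _) (e.app _) (e.hom.naturality P.π).symm) (hφ := hg)
  exact (HomologicalComplex.quasiIso_map_iff_of_preservesHomology _ _).mp hk

/-- Change of rings `Tor^R(h^*M, N) ≅ Tor^S(M, S ⊗_R N)` along a base change `h : R → S` of
`g : T → B`, when `R` and `N` are projective over `T`. -/
def torExtendScalarsIso
    (sq : IsPushout (CommRingCat.ofHom f) (CommRingCat.ofHom g)
      (CommRingCat.ofHom h) (CommRingCat.ofHom k))
    [Projective ((ModuleCat.restrictScalars.{u} f).obj (.of R R))] (M : ModuleCat.{u} S)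
    (N : ModuleCat.{u} R) [Projective ((ModuleCat.restrictScalars.{u} f).obj N)] (n : ℕ) :
    ((Tor (ModuleCat.{u} R) n).obj ((ModuleCat.restrictScalars h).obj M)).obj N ≅
      (ModuleCat.restrictScalars h).obj
        (((Tor (ModuleCat.{u} S) n).obj M).obj ((ModuleCat.extendScalars.{u, u, u} h).obj N)) :=
  have := quasiIso_extendScalars_map_π sq (projectiveResolution N)
  leftDerivedObjIsoOfQuasiIso (tensoringLeftRestrictScalarsIso h M) (projectiveResolution N) n

end BaseChange

section TensorPower

open Algebra.TensorProduct

lemma isPushout_of_tensorProduct_algEquiv {K B C S : Type u} [CommRing K] [CommRing B]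
    [CommRing C] [CommRing S] [Algebra K B] [Algebra K C] [Algebra K S] (e : B ⊗[K] C ≃ₐ[K] S) :
    IsPushout (CommRingCat.ofHom (algebraMap K B)) (CommRingCat.ofHom (algebraMap K C))
      (CommRingCat.ofHom (e.toAlgHom.comp includeLeft).toRingHom)
      (CommRingCat.ofHom (e.toAlgHom.comp includeRight).toRingHom) :=
  (CommRingCat.isPushout_tensorProduct K B C).of_iso (.refl _) (.refl _) (.refl _)
    e.toCommRingCatIso (by rfl) (by rfl) (by rfl) (by rfl)

variable (K A : Type u) [CommRing K] [CommRing A] [Algebra K A]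

/-- The map `μ₃ : a ⊗ b ⊗ c ↦ abc` over a commutative base ring. -/
def mulThree : (A ⊗[K] A) ⊗[K] A →ₐ[K] A :=
  (lmul' K).comp (map (lmul' K) (.id K A))

/-- The map `ν : a ⊗ b ⊗ c ⊗ d ↦ ab ⊗ cd` over a commutative base ring. -/
def mulPairs : (A ⊗[K] A) ⊗[K] (A ⊗[K] A) →ₐ[K] A ⊗[K] A :=
  map (lmul' K) (lmul' K)

/-- The map `1 ⊗ μ ⊗ 1 : a ⊗ b ⊗ c ⊗ d ↦ a ⊗ bc ⊗ d`. -/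
def mulMiddle : (A ⊗[K] A) ⊗[K] (A ⊗[K] A) →ₐ[K] (A ⊗[K] A) ⊗[K] A :=
  productMap includeLeft (map includeRight (.id K A))

/-- The inclusion `b ↦ 1 ⊗ b ⊗ 1` of the middle factor of `A^{⊗3}`. -/
def inclMiddle : A →ₐ[K] (A ⊗[K] A) ⊗[K] A :=
  includeLeft.comp includeRight

/-- The inclusion `b ⊗ c ↦ 1 ⊗ b ⊗ c ⊗ 1` of the middle factors of `A^{⊗4}`. -/
def inclMiddlePair : A ⊗[K] A →ₐ[K] (A ⊗[K] A) ⊗[K] (A ⊗[K] A) :=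
  map includeRight includeLeft

/-- The inclusion `a ⊗ d ↦ a ⊗ 1 ⊗ 1 ⊗ d` of the outer factors of `A^{⊗4}`. -/
def inclOuterPair : A ⊗[K] A →ₐ[K] (A ⊗[K] A) ⊗[K] (A ⊗[K] A) :=
  map includeLeft includeRight

lemma mulMiddle_comp_inclMiddlePair :
    (mulMiddle K A).comp (inclMiddlePair K A) = (inclMiddle K A).comp (lmul' K) := by
  ext <;> simp [mulMiddle, inclMiddlePair, inclMiddle]

lemma mulPairs_comp_inclMiddlePair : (mulPairs K A).comp (inclMiddlePair K A) = .id K _ := by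
  ext <;> simp [mulPairs, inclMiddlePair]

lemma mulThree_comp_inclMiddle : (mulThree K A).comp (inclMiddle K A) = .id K A := by
  ext
  simp [mulThree, inclMiddle]

lemma mulThree_comp_mulMiddle :
    (mulThree K A).comp (mulMiddle K A) = (lmul' K).comp (mulPairs K A) := by
  ext <;> simp [mulThree, mulPairs, mulMiddle]

lemma isPushout_inclMiddlePair : IsPushout
    (CommRingCat.ofHom (algebraMap K (A ⊗[K] A))) (CommRingCat.ofHom (algebraMap K (A ⊗[K] A)))
    (CommRingCat.ofHom (inclMiddlePair K A).toRingHom)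
    (CommRingCat.ofHom (inclOuterPair K A).toRingHom) := by
  let e := (tensorTensorTensorComm K K K K A A A A).trans
    (Algebra.TensorProduct.congr (Algebra.TensorProduct.comm K A A) .refl)
  convert isPushout_of_tensorProduct_algEquiv e using 3
  all_goals ext <;> simp [e, inclMiddlePair, inclOuterPair, one_def]

lemma isPushout_inclMiddle : IsPushout
    (CommRingCat.ofHom (algebraMap K A)) (CommRingCat.ofHom (algebraMap K (A ⊗[K] A)))
    (CommRingCat.ofHom (inclMiddle K A).toRingHom)
    (CommRingCat.ofHom ((mulMiddle K A).comp (inclOuterPair K A)).toRingHom) := by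
  let e := (leftComm K A A A).trans (Algebra.TensorProduct.assoc K K K A A A).symm
  convert isPushout_of_tensorProduct_algEquiv e using 3
  all_goals ext <;> simp [e, inclMiddle, inclOuterPair, mulMiddle, one_def]

lemma isPushout_mulMiddle : IsPushout
    (CommRingCat.ofHom (inclMiddlePair K A).toRingHom)
    (CommRingCat.ofHom (lmul' K (S := A)).toRingHom)
    (CommRingCat.ofHom (mulMiddle K A).toRingHom)
    (CommRingCat.ofHom (inclMiddle K A).toRingHom) := by
  refine (IsPushout.of_left ?_ ?_ (isPushout_inclMiddlePair K A)).flip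
  · convert isPushout_inclMiddle K A
    · exact congr(CommRingCat.ofHom $((lmul' K (S := A)).comp_algebraMap))
    · rfl
  · exact congr(CommRingCat.ofHom ($(mulMiddle_comp_inclMiddlePair K A)).toRingHom).symm

lemma isPushout_mulPairs : IsPushout
    (CommRingCat.ofHom (mulPairs K A).toRingHom) (CommRingCat.ofHom (mulMiddle K A).toRingHom)
    (CommRingCat.ofHom (lmul' K (S := A)).toRingHom)
    (CommRingCat.ofHom (mulThree K A).toRingHom) := by
  -- Pasting with the square of `isPushout_mulMiddle` gives a square with two identity sides.
  refine IsPushout.of_left ?_ ?_ (isPushout_mulMiddle K A)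
  · convert IsPushout.of_id_fst (f := CommRingCat.ofHom (lmul' K (S := A)).toRingHom)
    · exact congr(CommRingCat.ofHom ($(mulPairs_comp_inclMiddlePair K A)).toRingHom)
    · exact congr(CommRingCat.ofHom ($(mulThree_comp_inclMiddle K A)).toRingHom)
  · exact congr(CommRingCat.ofHom ($(mulThree_comp_mulMiddle K A)).toRingHom).symm

theorem statement0_general [Module.Projective K A] (M : ModuleCat.{u} ((A ⊗[K] A) ⊗[K] A))
    (n : ℕ) :
    Nonempty
      (((Tor (ModuleCat.{u} ((A ⊗[K] A) ⊗[K] (A ⊗[K] A))) n).obj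
            ((ModuleCat.restrictScalars (mulMiddle K A).toRingHom).obj M)).obj
          ((ModuleCat.restrictScalars (mulPairs K A).toRingHom).obj
            (.of (A ⊗[K] A) (A ⊗[K] A))) ≅
        (ModuleCat.restrictScalars (mulMiddle K A).toRingHom).obj
          (((Tor (ModuleCat.{u} ((A ⊗[K] A) ⊗[K] A)) n).obj M).obj
            ((ModuleCat.restrictScalars (mulThree K A).toRingHom).obj (.of A A)))) := by
  have := projective_restrictScalars_algebraMap K (A ⊗[K] A)
  have := projective_restrictScalars_self_of_isPushout (isPushout_inclMiddlePair K A).flip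
  have : Projective (ModuleCat.of (A ⊗[K] A) (A ⊗[K] A)) :=
    (IsProjective.iff_projective _).mp inferInstance
  have : Projective ((ModuleCat.restrictScalars.{u} (inclMiddlePair K A).toRingHom).obj
      ((ModuleCat.restrictScalars (mulPairs K A).toRingHom).obj
        (.of (A ⊗[K] A) (A ⊗[K] A)))) :=
    projective_restrictScalars_restrictScalars_of_comp_eq_id
      congr(($(mulPairs_comp_inclMiddlePair K A)).toRingHom) _
  exact ⟨torExtendScalarsIso (isPushout_mulMiddle K A) M _ n ≪≫
    (ModuleCat.restrictScalars _).mapIso (((Tor _ n).obj M).mapIso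
      (extendScalarsRestrictScalarsSelfIso (isPushout_mulPairs K A)))⟩

end TensorPower

theorem statement0 (K : Type) [Field K] (A : Type) [CommRing A] [Algebra K A]
    (M : Type) [AddCommGroup M] [Module A M] (n : ℕ) :
    Nonempty
      ((ModuleCat.restrictScalars (algebraMap K ((A ⊗[K] A) ⊗[K] (A ⊗[K] A)))).obj
          (((Tor (ModuleCat ((A ⊗[K] A) ⊗[K] (A ⊗[K] A))) n).obj
              ((ModuleCat.restrictScalars (mu4 K A).toRingHom).obj (ModuleCat.of A M))).obj
            ((ModuleCat.restrictScalars (nu K A).toRingHom).obj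
              (ModuleCat.of (A ⊗[K] A) (A ⊗[K] A)))) ≅
        (ModuleCat.restrictScalars (algebraMap K ((A ⊗[K] A) ⊗[K] A))).obj
          (((Tor (ModuleCat ((A ⊗[K] A) ⊗[K] A)) n).obj
              ((ModuleCat.restrictScalars (mu3 K A).toRingHom).obj (ModuleCat.of A M))).obj
            ((ModuleCat.restrictScalars (mu3 K A).toRingHom).obj (ModuleCat.of A A)))) := by
  obtain ⟨e⟩ := statement0_general K A
    ((ModuleCat.restrictScalars (mu3 K A).toRingHom).obj (ModuleCat.of A M)) n
  have mu4_eq : (mu4 K A).toRingHom = (mu3 K A).toRingHom.comp (mulMiddle K A).toRingHom :=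
    congr(($(mulThree_comp_mulMiddle K A)).toRingHom).symm
  let restrictM := ModuleCat.restrictScalarsComp'App _ _ _ mu4_eq (ModuleCat.of A M)
  exact ⟨(ModuleCat.restrictScalars _).mapIso (((Tor _ n).mapIso restrictM).app _ ≪≫ e) ≪≫
    (ModuleCat.restrictScalarsComp'App _ _ _ (mulMiddle K A).comp_algebraMap.symm _).symm⟩
end
end

section
/- Let K be a field and A an ℕ-graded, graded-commutative K-algebra (ab = (−1)^{|a||b|} ba for homogeneous a, b) such that A_0 = K·1 is one-dimensional. Let A ⊗̂ A denote the graded tensor product of A with itself with Koszul signs, i.e. the ℕ-graded algebra with (A ⊗̂ A)_n = ⊕_{p+q=n} A_p ⊗_K A_q and multiplication (a⊗b)(a'⊗b') = (−1)^{|b||a'|} aa' ⊗ bb' on homogeneous elements, and regard A as a graded (A ⊗̂ A)-module via the algebra homomorphism A ⊗̂ A → A, a⊗b ↦ ab. Let d ≤ 0 be an integer and let h : A → A ⊗̂ A be an (A ⊗̂ A)-linear map of degree d, meaning h(A_n) ⊆ (A ⊗̂ A)_{n+d} for all n (with (A ⊗̂ A)_m = 0 for m < 0) and h(r·x) = (−1)^{d|r|}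 r·h(x) for homogeneous r ∈ A ⊗̂ A and x ∈ A. If d = 0, assume in addition that A_n ≠ 0 for some n > 0. Then h = 0. -/
/-!
STATEMENT 4: Let `A` be an ℕ-graded (i.e. `ℤ`-graded with trivial negative components),
graded-commutative, associative, unital `K`-algebra with `A_0 = K·1` one-dimensional.  Let
`A ⊗̂ A` be the graded tensor square with Koszul-signed multiplication
`(a ⊗ b)(a' ⊗ b') = (-1)^{|b||a'|} aa' ⊗ bb'`, and regard `A` as an `(A ⊗̂ A)`-module via
`a ⊗ b ↦ ab`.  Let `d ≤ 0` and let `h : A → A ⊗̂ A` be an `(A ⊗̂ A)`-linear map of degree `d`,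
i.e. `h (r · x) = (-1)^{d |r|} r · h x` for homogeneous `r`.  If `d = 0`, assume in addition
that `A_n ≠ 0` for some `n > 0`.  Then `h = 0`.
-/

open scoped TensorProduct DirectSum

noncomputable section

/-- Cast along an equality of degrees. -/
def gcast (K : Type) [Field K] (A : ℤ → Type) [∀ n, AddCommGroup (A n)] [∀ n, Module K (A n)]
    {m n : ℤ} (h : m = n) : A m →ₗ[K] A n := by subst h; exact LinearMap.id

/-- The indexing set of the degree-`n` component of the tensor product of graded vector
spaces: pairs of degrees summing to `n`. -/
abbrev gtIdx (n : ℤ) : Type := {x : ℤ × ℤ // x.1 + x.2 = n}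

/-- The degree-`n` component `⊕_{p+q=n} A_p ⊗ A_q` of the graded tensor square `A ⊗̂ A`. -/
abbrev gt (K : Type) [Field K] (A : ℤ → Type)
    [∀ n, AddCommGroup (A n)] [∀ n, Module K (A n)] (n : ℤ) : Type :=
  ⨁ pq : gtIdx n, A pq.1.1 ⊗[K] A pq.1.2

/-- The multiplication of the graded algebra `A ⊗̂ A` (with Koszul signs):
`(a ⊗ b)(a' ⊗ b') = (-1)^{|b||a'|} (a a') ⊗ (b b')`. -/
def gtMul (K : Type) [Field K] (A : ℤ → Type)
    [∀ n, AddCommGroup (A n)] [∀ n, Module K (A n)]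
    (mul : ∀ p q : ℤ, A p →ₗ[K] A q →ₗ[K] A (p + q)) (m n : ℤ) :
    gt K A m →ₗ[K] gt K A n →ₗ[K] gt K A (m + n) :=
  DirectSum.toModule K _ _ fun pq =>
    (DirectSum.toModule K _ _ fun rs =>
      (TensorProduct.curry
        (DirectSum.lof K (gtIdx (m + n)) (fun ij => A ij.1.1 ⊗[K] A ij.1.2)
            ⟨(pq.1.1 + rs.1.1, pq.1.2 + rs.1.2), by
              have h1 := pq.2; have h2 := rs.2; dsimp at h1 h2 ⊢; omega⟩ ∘ₗ
          (((-1 : K) ^ (pq.1.2 * rs.1.1)) •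
            TensorProduct.map (TensorProduct.lift (mul pq.1.1 rs.1.1))
              (TensorProduct.lift (mul pq.1.2 rs.1.2))) ∘ₗ
          (TensorProduct.tensorTensorTensorComm K (A pq.1.1) (A pq.1.2) (A rs.1.1)
            (A rs.1.2)).toLinearMap)).flip).flip

/-- The action of `A ⊗̂ A` on `A` via the multiplication morphism `a ⊗ b ↦ ab`:
`(a ⊗ b) · x = a b x`. -/
def gtAct (K : Type) [Field K] (A : ℤ → Type)
    [∀ n, AddCommGroup (A n)] [∀ n, Module K (A n)]
    (mul : ∀ p q : ℤ, A p →ₗ[K] A q →ₗ[K] A (p + q)) (m n : ℤ) :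
    gt K A m →ₗ[K] A n →ₗ[K] A (m + n) :=
  DirectSum.toModule K _ _ fun pq =>
    TensorProduct.lift
      (((mul pq.1.1 pq.1.2).compr₂ (mul (pq.1.1 + pq.1.2) n)).compr₂
        (LinearMap.llcomp K (A n) (A (pq.1.1 + pq.1.2 + n)) (A (m + n))
          (gcast K A (by have := pq.2; omega))))

/-!
An `(A ⊗̂ A)`-linear map `h` satisfies `h x = ± (x ⊗ 1) · h 1`, so everything is about `h 1`, which
lives in degree `d`. For `d < 0` there is nothing there. For `d = 0` it is a multiple
`c • (1 ⊗ 1)`; since `x ⊗ 1` and `1 ⊗ x` both act on `1` as `x`, they also agree on `h 1`, that is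
`c • (x ⊗ 1) = c • (1 ⊗ x)`. For `x ≠ 0` of positive degree the two sides lie in the distinct
summands `A_n ⊗ A_0` and `A_0 ⊗ A_n`, so `c = 0`.
-/

theorem tmul_ne_zero {R V W : Type*} [CommRing R] [IsDomain R]
    [AddCommGroup V] [Module R V] [Module.IsTorsionFree R V]
    [AddCommGroup W] [Module R W] [Module.IsTorsionFree R W] {v : V} {w : W}
    (hv : v ≠ 0) (hw : w ≠ 0) : v ⊗ₜ[R] w ≠ 0 :=
  ((LinearIndependent.of_subsingleton (v := fun _ : Unit => v) () hv).tmul_of_isDomain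
    (LinearIndependent.of_subsingleton (v := fun _ : Unit => w) () hw)).ne_zero ((), ())

section GradedModule

variable (K : Type) [Field K] (A : ℤ → Type) [∀ n, AddCommGroup (A n)] [∀ n, Module K (A n)]

theorem gcast_gcast {m n k : ℤ} (hmn : m = n) (hnk : n = k) (x : A m) :
    gcast K A hnk (gcast K A hmn x) = gcast K A (hmn.trans hnk) x := by
  subst hmn hnk
  rfl

theorem gcast_injective {m n : ℤ} (hmn : m = n) : Function.Injective (gcast K A hmn) := by
  subst hmn
  exact Function.injective_id

/-- The homogeneous tensor `a ⊗ b` as an element of `A ⊗̂ A`, bilinear in `a` and `b`. Its degree is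
any `n` equal to `p + q`, so that degree casts are absorbed into the proof of `p + q = n`. -/
def gtTmul {p q n : ℤ} (hpq : p + q = n) : A p →ₗ[K] A q →ₗ[K] gt K A n :=
  (TensorProduct.mk K (A p) (A q)).compr₂
    (DirectSum.lof K (gtIdx n) (fun ij => A ij.1.1 ⊗[K] A ij.1.2) ⟨(p, q), hpq⟩)

variable {K A}

theorem gtTmul_gcast {p p' q q' n : ℤ} (hp : p = p') (hq : q = q') (hpq : p' + q' = n)
    (a : A p) (b : A q) :
    gtTmul K A hpq (gcast K A hp a) (gcast K A hq b) =
      gtTmul K A ((congrArg₂ (· + ·) hp hq).trans hpq) a b := by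
  subst hp hq
  rfl

theorem gt_induction {n : ℤ} {motive : gt K A n → Prop} (zero : motive 0)
    (tmul : ∀ (p q : ℤ) (hpq : p + q = n) (a : A p) (b : A q), motive (gtTmul K A hpq a b))
    (add : ∀ y z, motive y → motive z → motive (y + z)) (z : gt K A n) : motive z := by
  induction z using DirectSum.induction_on with
  | zero => exact zero
  | of pq t =>
    induction t with
    | zero => simpa only [map_zero] using zero
    | tmul a b => exact tmul pq.1.1 pq.1.2 pq.2 a b
    | add s t hs ht => simpa only [map_add] using add _ _ hs ht
  | add y z hy hz => exact add y z hy hz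

theorem gtTmul_ne_gtTmul_of_fst_ne {p q p' q' n : ℤ} {hpq : p + q = n} {hpq' : p' + q' = n}
    (hp : p ≠ p') {a : A p} {b : A q} (ha : a ≠ 0) (hb : b ≠ 0) (a' : A p') (b' : A q') :
    gtTmul K A hpq a b ≠ gtTmul K A hpq' a' b' := by
  intro heq
  rcases (DFinsupp.single_eq_single_iff _ _ _ _).mp heq with ⟨hidx, -⟩ | ⟨hab, -⟩
  · exact hp (congrArg (fun ij : gtIdx n => ij.1.1) hidx)
  · exact tmul_ne_zero ha hb hab

theorem gtTmul_eq_zero_of_neg (hneg : ∀ n : ℤ, n < 0 → Subsingleton (A n)) {p q n : ℤ}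
    (hpq : p + q = n) (h : p < 0 ∨ q < 0) (a : A p) (b : A q) : gtTmul K A hpq a b = 0 := by
  rcases h with hp | hq
  · have := hneg p hp
    rw [Subsingleton.elim a 0, LinearMap.map_zero₂]
  · have := hneg q hq
    rw [Subsingleton.elim b 0, map_zero]

theorem subsingleton_gt_of_neg (hneg : ∀ n : ℤ, n < 0 → Subsingleton (A n)) {n : ℤ} (hn : n < 0) :
    Subsingleton (gt K A n) := by
  refine subsingleton_of_forall_eq 0 fun z => ?_
  induction z using gt_induction with
  | zero => rfl
  | tmul p q hpq a b => exact gtTmul_eq_zero_of_neg hneg hpq (by omega) a b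
  | add y z hy hz => rw [hy, hz, add_zero]

theorem mem_span_one_tmul_one (hneg : ∀ n : ℤ, n < 0 → Subsingleton (A n)) {one : A 0}
    (hspan : Function.Surjective fun c : K => c • one) {n : ℤ} (hn : 0 + 0 = n) (z : gt K A n) :
    z ∈ K ∙ gtTmul K A hn one one := by
  induction z using gt_induction with
  | zero => exact zero_mem _
  | tmul p q hpq a b =>
    by_cases hlt : p < 0 ∨ q < 0
    · rw [gtTmul_eq_zero_of_neg hneg hpq hlt]
      exact zero_mem _
    · obtain ⟨rfl, rfl⟩ : p = 0 ∧ q = 0 := by omega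
      obtain ⟨u, rfl⟩ := hspan a
      obtain ⟨v, rfl⟩ := hspan b
      simp only [map_smul, LinearMap.smul_apply]
      exact Submodule.smul_mem _ _ (Submodule.smul_mem _ _ (Submodule.mem_span_singleton_self _))
  | add y z hy hz => exact add_mem hy hz

end GradedModule

section GradedAlgebra

variable {K : Type} [Field K] {A : ℤ → Type} [∀ n, AddCommGroup (A n)] [∀ n, Module K (A n)]
  {mul : ∀ p q : ℤ, A p →ₗ[K] A q →ₗ[K] A (p + q)}

theorem gtAct_gtTmul {p q m : ℤ} (hpq : p + q = m) (n : ℤ) (a : A p) (b : A q) (x : A n) :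
    gtAct K A mul m n (gtTmul K A hpq a b) x =
      gcast K A (by omega) (mul (p + q) n (mul p q a b) x) := by
  simp only [gtAct, gtTmul, LinearMap.compr₂_apply, DirectSum.toModule_lof]
  rfl

theorem gtMul_gtTmul {p q r s m n : ℤ} (hpq : p + q = m) (hrs : r + s = n)
    (a : A p) (b : A q) (a' : A r) (b' : A s) :
    gtMul K A mul m n (gtTmul K A hpq a b) (gtTmul K A hrs a' b') =
      ((-1 : K) ^ (q * r)) •
        gtTmul K A (show p + r + (q + s) = m + n by omega) (mul p r a a') (mul q s b b') := by
  simp only [gtMul, gtTmul, LinearMap.compr₂_apply, DirectSum.toModule_lof, LinearMap.flip_apply]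
  rw [← map_smul]
  rfl

/-- `one` is a left unit of the graded multiplication `mul`. The identification of the degrees `p`
and `0 + p` is a bound variable, so the equation holds for whichever proof a cast carries. -/
def IsLeftUnit (mul : ∀ p q : ℤ, A p →ₗ[K] A q →ₗ[K] A (p + q)) (one : A 0) : Prop :=
  ∀ (p : ℤ) (hp : p = 0 + p) (a : A p), mul 0 p one a = gcast K A hp a

/-- `one` is a right unit of the graded multiplication `mul`, encoded as in `IsLeftUnit`. -/
def IsRightUnit (mul : ∀ p q : ℤ, A p →ₗ[K] A q →ₗ[K] A (p + q)) (one : A 0) : Prop :=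
  ∀ (p : ℤ) (hp : p = p + 0) (a : A p), mul p 0 a one = gcast K A hp a

variable {one : A 0}

theorem gtAct_gtTmul_one (hmul_one : IsRightUnit mul one)
    {p q m : ℤ} (hpq : p + q = m) (a : A p) (b : A q) :
    gtAct K A mul m 0 (gtTmul K A hpq a b) one = gcast K A (by omega) (mul p q a b) := by
  rw [gtAct_gtTmul, hmul_one _ (by omega), gcast_gcast]

theorem gtMul_gtTmul_one_tmul_one (hmul_one : IsRightUnit mul one)
    {p q m n : ℤ} (hpq : p + q = m) (hn : 0 + 0 = n) (a : A p) (b : A q) :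
    gtMul K A mul m n (gtTmul K A hpq a b) (gtTmul K A hn one one) =
      gtTmul K A (show p + q = m + n by omega) a b := by
  rw [gtMul_gtTmul, hmul_one p (by omega), hmul_one q (by omega), gtTmul_gcast,
    mul_zero, zpow_zero, one_smul]

theorem gtAct_tmul_one_one (hmul_one : IsRightUnit mul one) {n : ℤ} (x : A n) :
    gcast K A (add_zero n) (gtAct K A mul n 0 (gtTmul K A (add_zero n) x one) one) = x := by
  rw [gtAct_gtTmul_one hmul_one, hmul_one _ (by omega), gcast_gcast, gcast_gcast]
  rfl

theorem gtAct_one_tmul_one (hone_mul : IsLeftUnit mul one) (hmul_one : IsRightUnit mul one)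
    {n : ℤ} (x : A n) :
    gcast K A (add_zero n) (gtAct K A mul n 0 (gtTmul K A (zero_add n) one x) one) = x := by
  rw [gtAct_gtTmul_one hmul_one, hone_mul _ (by omega), gcast_gcast, gcast_gcast]
  rfl

/-- Graded `(A ⊗̂ A)`-linearity of a map `h : A → A ⊗̂ A` of degree `d`, with the Koszul sign
`h (r · x) = (-1)^{d |r|} r · h x`; the identification of degrees is quantified over as in
`IsLeftUnit`. -/
def IsGtLinear (mul : ∀ p q : ℤ, A p →ₗ[K] A q →ₗ[K] A (p + q)) (d : ℤ)
    (h : ∀ n : ℤ, A n →ₗ[K] gt K A (n + d)) : Prop :=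
  ∀ (m n : ℤ) (hmn : m + (n + d) = m + n + d) (r : gt K A m) (x : A n),
    h (m + n) (gtAct K A mul m n r x) =
      ((-1 : K) ^ (d * m)) • gcast K (gt K A) hmn (gtMul K A mul m (n + d) r (h n x))

namespace IsGtLinear

variable {d : ℤ} {h : ∀ n : ℤ, A n →ₗ[K] gt K A (n + d)}

theorem gtMul_map_congr (hlin : IsGtLinear mul d h) {m n : ℤ} {r s : gt K A m} {x : A n}
    (hrs : gtAct K A mul m n r x = gtAct K A mul m n s x) :
    gtMul K A mul m (n + d) r (h n x) = gtMul K A mul m (n + d) s (h n x) := by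
  have hsign : ((-1 : K) ^ (d * m)) ≠ 0 := zpow_ne_zero _ (neg_ne_zero.mpr one_ne_zero)
  have hmap := congrArg (h (m + n)) hrs
  rw [hlin _ _ (by omega), hlin _ _ (by omega)] at hmap
  exact gcast_injective K (gt K A) _ (smul_right_injective _ hsign hmap)

theorem eq_zero_of_map_one_eq_zero (hlin : IsGtLinear mul d h)
    (hmul_one : IsRightUnit mul one) (hone : h 0 one = 0) (n : ℤ) (x : A n) : h n x = 0 := by
  have map_gcast : ∀ {k : ℤ} (hk : k = n) (y : A k), h k y = 0 → h n (gcast K A hk y) = 0 := by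
    rintro _ rfl y hy
    exact hy
  rw [← gtAct_tmul_one_one hmul_one x]
  apply map_gcast
  rw [hlin _ _ (by omega), hone, map_zero, map_zero, smul_zero]

theorem map_one_eq_zero_of_degree_zero (hlin : IsGtLinear mul d h) (hd : d = 0)
    (hneg : ∀ n : ℤ, n < 0 → Subsingleton (A n))
    (hone_mul : IsLeftUnit mul one) (hmul_one : IsRightUnit mul one)
    (hspan : Function.Surjective fun c : K => c • one)
    {n : ℤ} (hn : n ≠ 0) {x : A n} (hx : x ≠ 0) : h 0 one = 0 := by
  have hone : one ≠ 0 := by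
    rintro rfl
    exact hx (by rw [← gtAct_tmul_one_one hmul_one x, map_zero, map_zero])
  obtain ⟨c, hc⟩ := Submodule.mem_span_singleton.mp
    (mem_span_one_tmul_one hneg hspan (show 0 + 0 = 0 + d by omega) (h 0 one))
  have hcomm := hlin.gtMul_map_congr (gcast_injective K A _
    ((gtAct_tmul_one_one hmul_one x).trans (gtAct_one_tmul_one hone_mul hmul_one x).symm))
  rw [← hc, map_smul, map_smul, gtMul_gtTmul_one_tmul_one hmul_one,
    gtMul_gtTmul_one_tmul_one hmul_one] at hcomm
  have hc_zero : c = 0 := by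
    by_contra hc_ne
    exact gtTmul_ne_gtTmul_of_fst_ne hn hx hone one x (smul_right_injective _ hc_ne hcomm)
  rw [← hc, hc_zero, zero_smul]

end IsGtLinear

end GradedAlgebra

theorem statement4_general (K : Type) [Field K] (A : ℤ → Type)
    [∀ n, AddCommGroup (A n)] [∀ n, Module K (A n)]
    (hneg : ∀ n : ℤ, n < 0 → Subsingleton (A n))
    (mul : ∀ p q : ℤ, A p →ₗ[K] A q →ₗ[K] A (p + q))
    (one : A 0)
    (hone_mul : IsLeftUnit mul one)
    (hmul_one : IsRightUnit mul one)
    (hspan : Function.Surjective fun c : K => c • one)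
    (d : ℤ) (hd : d ≤ 0)
    (h : ∀ n : ℤ, A n →ₗ[K] gt K A (n + d))
    (hlin : IsGtLinear mul d h)
    (hd0 : d = 0 → ∃ n : ℤ, 0 < n ∧ ∃ x : A n, x ≠ 0) :
    ∀ (n : ℤ) (x : A n), h n x = 0 := by
  refine hlin.eq_zero_of_map_one_eq_zero hmul_one ?_
  rcases hd.lt_or_eq with hd_neg | hd_zero
  · have := subsingleton_gt_of_neg (K := K) hneg (show 0 + d < 0 by omega)
    exact Subsingleton.elim _ _
  · obtain ⟨n, hn, x, hx⟩ := hd0 hd_zero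
    exact hlin.map_one_eq_zero_of_degree_zero hd_zero hneg hone_mul hmul_one hspan hn.ne' hx

theorem statement4 (K : Type) [Field K] (A : ℤ → Type)
    [∀ n, AddCommGroup (A n)] [∀ n, Module K (A n)]
    -- `A` is ℕ-graded:
    (hneg : ∀ n : ℤ, n < 0 → Subsingleton (A n))
    -- `A` is a graded-commutative, associative, unital `K`-algebra:
    (mul : ∀ p q : ℤ, A p →ₗ[K] A q →ₗ[K] A (p + q))
    (one : A 0)
    (hone_mul : ∀ (p : ℤ) (a : A p), mul 0 p one a = gcast K A (by omega) a)
    (hmul_one : ∀ (p : ℤ) (a : A p), mul p 0 a one = gcast K A (by omega) a)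
    (hassoc : ∀ (p q r : ℤ) (a : A p) (b : A q) (c : A r),
      mul (p + q) r (mul p q a b) c = gcast K A (by omega) (mul p (q + r) a (mul q r b c)))
    (hcomm : ∀ (p q : ℤ) (a : A p) (b : A q),
      mul p q a b = ((-1 : K) ^ (p * q)) • gcast K A (by omega) (mul q p b a))
    -- `A_0 = K · 1` is one-dimensional:
    (hdim : Function.Bijective fun c : K => c • one)
    -- `h : A → A ⊗̂ A` is an `(A ⊗̂ A)`-linear map of degree `d ≤ 0`:
    (d : ℤ) (hd : d ≤ 0)
    (h : ∀ n : ℤ, A n →ₗ[K] gt K A (n + d))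
    (hlin : ∀ (m n : ℤ) (r : gt K A m) (x : A n),
      h (m + n) (gtAct K A mul m n r x) =
        ((-1 : K) ^ (d * m)) •
          gcast K (gt K A) (by omega : m + (n + d) = m + n + d)
            (gtMul K A mul m (n + d) r (h n x)))
    -- if `d = 0`, `A_n ≠ 0` for some `n > 0`:
    (hd0 : d = 0 → ∃ n : ℤ, 0 < n ∧ ∃ x : A n, x ≠ 0) :
    ∀ (n : ℤ) (x : A n), h n x = 0 :=
  statement4_general K A hneg mul one (fun p _ => hone_mul p) (fun p _ => hmul_one p)
    hdim.surjective d hd h (fun m n _ => hlin m n) hd0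
end
end
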